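/- If a ∈ k^× and a ≠ 1, then the Verma module M_{a,c} is a simple D-module for every c ∈ k. -/

import Mathlib

open FreeAlgebra

/-- Generators of the double of the Jordan plane. -/
inductive JGen : Type
  | u | v | zeta | g | ginv | x | y

variable (k : Type) [Field k] [IsAlgClosed k] [CharZero k]

/-- The defining relations of the double of the Jordan plane. -/
inductive JRel : FreeAlgebra k JGen → FreeAlgebra k JGen → Prop
  | gginv : JRel (ι k .g * ι k .ginv) 1
  | ginvg : JRel (ι k .ginv * ι k .g) 1
  | zg : JRel (ι k .zeta * ι k .g) (ι k .g * ι k .zeta)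
  | gx : JRel (ι k .g * ι k .x) (ι k .x * ι k .g)
  | gy : JRel (ι k .g * ι k .y) (ι k .y * ι k .g + ι k .x * ι k .g)
  | zy : JRel (ι k .zeta * ι k .y) (ι k .y * ι k .zeta + ι k .y)
  | zx : JRel (ι k .zeta * ι k .x) (ι k .x * ι k .zeta + ι k .x)
  | ug : JRel (ι k .u * ι k .g) (ι k .g * ι k .u)
  | vg : JRel (ι k .v * ι k .g) (ι k .g * ι k .v + ι k .g * ι k .u)
  | vz : JRel (ι k .v * ι k .zeta) (ι k .zeta * ι k .v + ι k .v)
  | uz : JRel (ι k .u * ι k .zeta) (ι k .zeta * ι k .u + ι k .u)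
  | yx : JRel (ι k .y * ι k .x) (ι k .x * ι k .y - (1/2 : k) • (ι k .x * ι k .x))
  | vu : JRel (ι k .v * ι k .u) (ι k .u * ι k .v - (1/2 : k) • (ι k .u * ι k .u))
  | ux : JRel (ι k .u * ι k .x) (ι k .x * ι k .u)
  | vx : JRel (ι k .v * ι k .x) (ι k .x * ι k .v + (1 - ι k .g) + ι k .x * ι k .u)
  | uy : JRel (ι k .u * ι k .y) (ι k .y * ι k .u + (1 - ι k .g))
  | vy : JRel (ι k .v * ι k .y) (ι k .y * ι k .v - ι k .g * ι k .zeta + ι k .y * ι k .u)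

/-- The double of the Jordan plane, as the presented algebra. -/
def D : Type := RingQuot (JRel k)

noncomputable instance : Ring (D k) := inferInstanceAs (Ring (RingQuot (JRel k)))
noncomputable instance : Algebra k (D k) := inferInstanceAs (Algebra k (RingQuot (JRel k)))

/-- The canonical projection from the free algebra onto `D`. -/
noncomputable def Dmk : FreeAlgebra k JGen →ₐ[k] D k := RingQuot.mkAlgHom k (JRel k)

noncomputable def DU : D k := Dmk k (ι k .u)
noncomputable def DV : D k := Dmk k (ι k .v)
noncomputable def DZ : D k := Dmk k (ι k .zeta)
noncomputable def DG : D k := Dmk k (ι k .g)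
noncomputable def DGinv : D k := Dmk k (ι k .ginv)
noncomputable def DX : D k := Dmk k (ι k .x)
noncomputable def DY : D k := Dmk k (ι k .y)

set_option synthInstance.maxHeartbeats 1000000
set_option maxHeartbeats 2000000

/-- The left ideal of `D` generated by `g - a`, `ζ + c/2`, `u`, `v`. -/
noncomputable def MIdeal (a c : k) : Submodule (D k) (D k) :=
  Submodule.span (D k)
    {DG k - algebraMap k (D k) a, DZ k + algebraMap k (D k) (c / 2), DU k, DV k}

/-- The Verma module `M_{a,c} = D ⊗_{D^{≥0}} T_{a,c}`, realized as the quotient of `D` by the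
left ideal generated by `g - a`, `ζ + c/2`, `u`, `v` (the annihilator in `D^{≥0}` of the
generator `z_{a,c}` of `T_{a,c}`, on which `g` acts by `a`, `ζ` by `-c/2`, and `u`, `v` by `0`).
The class of `1` corresponds to `1 ⊗ z_{a,c}`. -/
noncomputable abbrev Mver (a c : k) : Type := (D k) ⧸ (MIdeal k a c)

/-- The class of `d ∈ D` in `M_{a,c}`. -/
noncomputable def mmk (a c : k) : D k → Mver k a c := Submodule.Quotient.mk

/-
Let `z` be a nonzero highest weight vector of weight `(a, c)` generating a `D`-module, with
`a ≠ 1`. Moving `x` and `y` to the left of all the other generators shows that every vector has the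
form `∑ pⱼ(x) yʲ z`. Modulo lower powers of `y`, the element `u` sends `p(x) yⁿ⁺¹ z` to
`(n + 1) (1 - a) p(x) yⁿ z`, while `v` sends `p(x) z` to `(1 - a) p'(x) z`. Hence applying `u` and
then `v` repeatedly to any nonzero vector produces a nonzero multiple of `z`, so the module is
simple. That the generator of `M_{a,c}` is nonzero follows by exhibiting one `D`-module with a
nonzero highest weight vector.
-/

section Ring

open Polynomial

theorem mul_aeval_of_mul_eq_mul_add {R A : Type*} [CommSemiring R] [Semiring A] [Algebra R A]
    {t x b : A} (h : t * x = x * t + b) (hb : Commute b x) (p : R[X]) :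
    t * aeval x p = aeval x p * t + aeval x (derivative p) * b := by
  induction p using Polynomial.induction_on with
  | C r => simp [Algebra.commutes]
  | add p q hp hq =>
    simp only [map_add, mul_add, add_mul, hp, hq]
    abel
  | monomial n r ih =>
    rw [pow_succ, ← mul_assoc]
    generalize C r * X ^ n = q at ih ⊢
    calc t * aeval x (q * X)
        = t * aeval x q * x := by rw [map_mul, aeval_X, mul_assoc]
      _ = aeval x q * (t * x) + aeval x (derivative q) * (b * x) := by
        rw [ih, add_mul, mul_assoc, mul_assoc]
      _ = aeval x (q * X) * t + aeval x (derivative (q * X)) * b := by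
        rw [h, hb.eq]
        simp only [derivative_mul, derivative_X, map_mul, map_add, aeval_X, mul_one, mul_add,
          add_mul, mul_assoc]
        abel

end Ring

section Relations

variable (F : Type) [Field F]

theorem Dmk_surjective : Function.Surjective (Dmk F) := RingQuot.mkAlgHom_surjective F (JRel F)

variable {F} in
theorem Dmk_eq_of_rel {p q : FreeAlgebra F JGen} (h : JRel F p q) : Dmk F p = Dmk F q :=
  RingQuot.mkAlgHom_rel F h

theorem DG_mul_DGinv : DG F * DGinv F = 1 := by
  simpa only [DG, DGinv, map_mul, map_one] using Dmk_eq_of_rel (JRel.gginv (k := F))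

theorem DGinv_mul_DG : DGinv F * DG F = 1 := by
  simpa only [DGinv, DG, map_mul, map_one] using Dmk_eq_of_rel (JRel.ginvg (k := F))

theorem commute_DG_DX : Commute (DG F) (DX F) := by
  simpa only [commute_iff_eq, DG, DX, map_mul] using Dmk_eq_of_rel (JRel.gx (k := F))

theorem DG_mul_DY : DG F * DY F = DY F * DG F + DX F * DG F := by
  simpa only [DG, DY, DX, map_mul, map_add] using Dmk_eq_of_rel (JRel.gy (k := F))

theorem DZ_mul_DX : DZ F * DX F = DX F * DZ F + DX F := by
  simpa only [DZ, DX, map_mul, map_add] using Dmk_eq_of_rel (JRel.zx (k := F))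

theorem DZ_mul_DY : DZ F * DY F = DY F * DZ F + DY F := by
  simpa only [DZ, DY, map_mul, map_add] using Dmk_eq_of_rel (JRel.zy (k := F))

theorem DY_mul_DX : DY F * DX F = DX F * DY F - (1 / 2 : F) • (DX F * DX F) := by
  simpa only [DY, DX, map_mul, map_sub, map_smul] using Dmk_eq_of_rel (JRel.yx (k := F))

theorem commute_DU_DX : Commute (DU F) (DX F) := by
  simpa only [commute_iff_eq, DU, DX, map_mul] using Dmk_eq_of_rel (JRel.ux (k := F))

theorem DU_mul_DY : DU F * DY F = DY F * DU F + (1 - DG F) := by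
  simpa only [DU, DY, DG, map_mul, map_add, map_sub, map_one] using Dmk_eq_of_rel (JRel.uy (k := F))

theorem DV_mul_DX : DV F * DX F = DX F * DV F + (1 - DG F) + DX F * DU F := by
  simpa only [DV, DX, DG, DU, map_mul, map_add, map_sub, map_one] using
    Dmk_eq_of_rel (JRel.vx (k := F))

theorem DV_mul_DY : DV F * DY F = DY F * DV F - DG F * DZ F + DY F * DU F := by
  simpa only [DV, DY, DG, DZ, DU, map_mul, map_add, map_sub] using Dmk_eq_of_rel (JRel.vy (k := F))

/-- The group-like generator `g` as a unit of `D`. -/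
noncomputable def DGUnit : (D F)ˣ := ⟨DG F, DGinv F, DG_mul_DGinv F, DGinv_mul_DG F⟩

theorem commute_DGinv_DX : Commute (DGinv F) (DX F) :=
  Commute.units_inv_left (u := DGUnit F) (commute_DG_DX F)

theorem DGinv_mul_DY : DGinv F * DY F = DY F * DGinv F - DX F * DGinv F := by
  have conj_DY : SemiconjBy (DGUnit F : D F) (DY F) (DY F + DX F) :=
    (DG_mul_DY F).trans (add_mul _ _ _).symm
  have conj_inv : DGinv F * (DY F + DX F) = DY F * DGinv F := conj_DY.units_inv_symm_left
  rw [eq_sub_iff_add_eq, ← conj_inv, mul_add, (commute_DGinv_DX F).eq]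

end Relations

section JordanPlane

open Submodule

variable (F : Type) [Field F]

/-- The Jordan plane: the subalgebra of `D` generated by `x` and `y`. -/
noncomputable def jordanPlane : Subalgebra F (D F) := Algebra.adjoin F {DX F, DY F}

variable {F} {M : Type*} [AddCommGroup M] [Module (D F) M] {z m : M}

theorem DX_smul_mem_span_jordanPlane (hm : m ∈ span (jordanPlane F) {z}) :
    DX F • m ∈ span (jordanPlane F) {z} :=
  smul_mem _ (⟨DX F, Algebra.subset_adjoin (by simp)⟩ : jordanPlane F) hm

theorem DY_smul_mem_span_jordanPlane (hm : m ∈ span (jordanPlane F) {z}) :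
    DY F • m ∈ span (jordanPlane F) {z} :=
  smul_mem _ (⟨DY F, Algebra.subset_adjoin (by simp)⟩ : jordanPlane F) hm

variable [Module F M] [IsScalarTower F (D F) M]

theorem span_jordanPlane_induction {P : (m : M) → m ∈ span (jordanPlane F) {z} → Prop}
    (self : P z (mem_span_singleton_self z))
    (add : ∀ m m' hm hm', P m hm → P m' hm' → P (m + m') (add_mem hm hm'))
    (smul : ∀ (r : F) m hm, P m hm → P (r • m) (smul_of_tower_mem _ r hm))
    (DX_smul : ∀ m hm, P m hm → P (DX F • m) (DX_smul_mem_span_jordanPlane hm))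
    (DY_smul : ∀ m hm, P m hm → P (DY F • m) (DY_smul_mem_span_jordanPlane hm))
    (hm : m ∈ span (jordanPlane F) {z}) : P m hm := by
  obtain ⟨⟨d, hd⟩, rfl⟩ := mem_span_singleton.1 hm
  suffices ∀ m, (∃ hm, P m hm) → ∃ hdm, P (d • m) hdm from (this z ⟨_, self⟩).2
  clear hm
  induction hd using Algebra.adjoin_induction with
  | mem d hd =>
    rintro m ⟨hm, h⟩
    rcases hd with rfl | rfl
    exacts [⟨_, DX_smul m hm h⟩, ⟨_, DY_smul m hm h⟩]
  | algebraMap r =>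
    rintro m ⟨hm, h⟩
    rw [algebraMap_smul]
    exact ⟨_, smul r m hm h⟩
  | add d e _ _ hd he =>
    intro m h
    obtain ⟨hdm, h_d⟩ := hd m h
    obtain ⟨hem, h_e⟩ := he m h
    rw [add_smul]
    exact ⟨_, add _ _ hdm hem h_d h_e⟩
  | mul d e _ _ hd he =>
    intro m h
    rw [mul_smul]
    exact hd _ (he m h)

theorem smul_mem_span_jordanPlane {t : D F} (self : t • z ∈ span (jordanPlane F) {z})
    (DX_smul : ∀ m ∈ span (jordanPlane F) {z}, t • m ∈ span (jordanPlane F) {z} →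
      t • DX F • m ∈ span (jordanPlane F) {z})
    (DY_smul : ∀ m ∈ span (jordanPlane F) {z}, t • m ∈ span (jordanPlane F) {z} →
      t • DY F • m ∈ span (jordanPlane F) {z})
    (hm : m ∈ span (jordanPlane F) {z}) : t • m ∈ span (jordanPlane F) {z} := by
  induction hm using span_jordanPlane_induction with
  | self => exact self
  | add m m' _ _ hm hm' => rw [smul_add]; exact add_mem hm hm'
  | smul r m _ hm => rw [smul_comm t r]; exact smul_of_tower_mem _ r hm
  | DX_smul m hm htm => exact DX_smul m hm htm
  | DY_smul m hm htm => exact DY_smul m hm htm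

theorem smul_mem_of_forall_generator_smul_mem {W : Submodule F M}
    (hW : ∀ (s : JGen), ∀ w ∈ W, Dmk F (ι F s) • w ∈ W) (d : D F) : ∀ w ∈ W, d • w ∈ W := by
  obtain ⟨f, rfl⟩ := Dmk_surjective F d
  induction f using FreeAlgebra.induction with
  | grade0 r =>
    intro w hw
    rw [AlgHom.commutes, algebraMap_smul]
    exact W.smul_mem r hw
  | grade1 s => exact hW s
  | mul f f' hf hf' =>
    intro w hw
    rw [map_mul, mul_smul]
    exact hf _ (hf' w hw)
  | add f f' hf hf' =>
    intro w hw
    rw [map_add, add_smul]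
    exact add_mem (hf w hw) (hf' w hw)

end JordanPlane

section Filtration

open Submodule

variable (F : Type) [Field F] {M : Type*} [AddCommGroup M] [Module (D F) M]

/-- The filtration of the `D`-module generated by `z` by degree in `y`: the `n`-th term is spanned
by the vectors `p(x) yʲ z` with `j < n`. It is a module over `F[x]`, the algebra generated by `x`,
rather than over `F` only, so that `u` and `g`, which commute with `x`, act on it linearly. -/
noncomputable def yFiltration (z : M) (n : ℕ) : Submodule (Algebra.adjoin F {DX F}) M :=
  span (Algebra.adjoin F {DX F}) ((fun j ↦ DY F ^ j • z) '' Set.Iio n)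

variable {F} {z m : M} {n : ℕ}

theorem yFiltration_zero : yFiltration F z 0 = ⊥ := by
  simp [yFiltration]

theorem mem_yFiltration_succ_iff : m ∈ yFiltration F z (n + 1) ↔
    ∃ r : Algebra.adjoin F {DX F}, ∃ m' ∈ yFiltration F z n, m = r • DY F ^ n • z + m' := by
  rw [yFiltration, ← Order.succ_eq_add_one, Order.Iio_succ_eq_insert, Set.image_insert_eq,
    mem_span_insert, yFiltration]

theorem yFiltration_mono : Monotone (yFiltration F z) :=
  fun _ _ h ↦ span_mono (Set.image_mono (Set.Iio_subset_Iio h))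

theorem DY_pow_smul_mem_yFiltration {j : ℕ} (h : j < n) : DY F ^ j • z ∈ yFiltration F z n :=
  subset_span (Set.mem_image_of_mem _ h)

theorem DX_smul_mem_yFiltration (hm : m ∈ yFiltration F z n) : DX F • m ∈ yFiltration F z n :=
  smul_mem _ (⟨DX F, Algebra.self_mem_adjoin_singleton F _⟩ : Algebra.adjoin F {DX F}) hm

theorem smul_mem_span_adjoin_DX_of_commute {t : D F} (ht : Commute t (DX F)) {s : Set M}
    {N : Submodule (Algebra.adjoin F {DX F}) M} (hs : ∀ m ∈ s, t • m ∈ N)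
    (hm : m ∈ span (Algebra.adjoin F {DX F}) s) : t • m ∈ N := by
  induction hm using span_induction with
  | mem m hm => exact hs m hm
  | zero => rw [smul_zero]; exact zero_mem N
  | add m m' _ _ hm hm' => rw [smul_add]; exact add_mem hm hm'
  | smul r m _ hm =>
    have htr : Commute t r := Algebra.commute_of_mem_adjoin_singleton_of_commute r.2 ht
    rw [Subalgebra.smul_def, ← mul_smul, htr.eq, mul_smul]
    exact smul_mem N r hm

theorem exists_DY_mul_eq (r : Algebra.adjoin F {DX F}) :
    ∃ r' : Algebra.adjoin F {DX F}, DY F * r = r * DY F + r' := by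
  obtain ⟨p, hp⟩ := Algebra.adjoin_mem_exists_aeval F (DX F) r.2
  have commutator : DY F * DX F = DX F * DY F + -(1 / 2 : F) • (DX F * DX F) := by
    rw [DY_mul_DX, neg_smul, sub_eq_add_neg]
  have commutator_comm : Commute (-(1 / 2 : F) • (DX F * DX F)) (DX F) :=
    ((Commute.refl (DX F)).mul_left (Commute.refl (DX F))).smul_left _
  have mem : Polynomial.aeval (DX F) (Polynomial.derivative p) * (-(1 / 2 : F) • (DX F * DX F)) ∈
      Algebra.adjoin F {DX F} :=
    mul_mem (Polynomial.aeval_mem_adjoin_singleton F _)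
      (Subalgebra.smul_mem _ (mul_mem (Algebra.self_mem_adjoin_singleton F _)
        (Algebra.self_mem_adjoin_singleton F _)) _)
  exact ⟨⟨_, mem⟩, by rw [← hp, mul_aeval_of_mul_eq_mul_add commutator commutator_comm]⟩

theorem DY_smul_mem_yFiltration (hm : m ∈ yFiltration F z n) :
    DY F • m ∈ yFiltration F z (n + 1) := by
  induction hm using span_induction with
  | mem m hm =>
    obtain ⟨j, hj, rfl⟩ := hm
    rw [← mul_smul, ← pow_succ']
    exact DY_pow_smul_mem_yFiltration (Nat.succ_lt_succ hj)
  | zero => rw [smul_zero]; exact zero_mem _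
  | add m m' _ _ hm hm' => rw [smul_add]; exact add_mem hm hm'
  | smul r m hm' hm =>
    obtain ⟨r', hr'⟩ := exists_DY_mul_eq r
    have : DY F • r • m = r • DY F • m + r' • m := by
      simp only [Subalgebra.smul_def, ← mul_smul, hr', add_smul]
    rw [this]
    exact add_mem (smul_mem _ r hm) (smul_mem _ r' (yFiltration_mono n.le_succ hm'))

variable [Module F M] [IsScalarTower F (D F) M]

theorem exists_mem_yFiltration_of_mem_span_jordanPlane (hm : m ∈ span (jordanPlane F) {z}) :
    ∃ n, m ∈ yFiltration F z n := by
  induction hm using span_jordanPlane_induction with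
  | self => exact ⟨1, by simpa using DY_pow_smul_mem_yFiltration (F := F) (z := z) zero_lt_one⟩
  | add m m' _ _ hm hm' =>
    obtain ⟨n, hn⟩ := hm
    obtain ⟨n', hn'⟩ := hm'
    exact ⟨max n n', add_mem (yFiltration_mono (le_max_left n n') hn)
      (yFiltration_mono (le_max_right n n') hn')⟩
  | smul r m _ hm => exact hm.imp fun _ hn ↦ smul_of_tower_mem _ r hn
  | DX_smul m _ hm => exact hm.imp fun _ hn ↦ DX_smul_mem_yFiltration hn
  | DY_smul m _ hm => exact hm.elim fun n hn ↦ ⟨n + 1, DY_smul_mem_yFiltration hn⟩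

end Filtration

section HighestWeight

open Submodule

variable {F : Type} [Field F] {M : Type*} [AddCommGroup M] [Module F M] [Module (D F) M]

/-- A highest weight vector of weight `(a, c)`: a vector on which the subalgebra `D^{≥0}` acts
as it does on the generator of `T_{a,c}`. The vector `0` is not excluded. -/
structure IsHighestWeightVector (a c : F) (z : M) : Prop where
  DG_smul : DG F • z = a • z
  DZ_smul : DZ F • z = (-(c / 2)) • z
  DU_smul : DU F • z = 0
  DV_smul : DV F • z = 0

namespace IsHighestWeightVector

variable [IsScalarTower F (D F) M] {a c : F} {z m : M} (hz : IsHighestWeightVector a c z)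

include hz

theorem DGinv_smul : DGinv F • z = a⁻¹ • z := by
  have smul_DGinv : a • DGinv F • z = z := by
    rw [smul_comm, ← hz.DG_smul, ← mul_smul, DGinv_mul_DG, one_smul]
  rcases eq_or_ne a 0 with rfl | ha
  · have : z = 0 := by rw [← smul_DGinv, zero_smul]
    rw [this, smul_zero, smul_zero]
  · rw [eq_inv_smul_iff₀ ha, smul_DGinv]

theorem DG_smul_mem_span_jordanPlane (hm : m ∈ span (jordanPlane F) {z}) :
    DG F • m ∈ span (jordanPlane F) {z} := by
  refine smul_mem_span_jordanPlane ?_ (fun m _ hgm ↦ ?_) (fun m _ hgm ↦ ?_) hm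
  · rw [hz.DG_smul]
    exact smul_of_tower_mem _ a (mem_span_singleton_self z)
  · rw [← mul_smul, (commute_DG_DX F).eq, mul_smul]
    exact DX_smul_mem_span_jordanPlane hgm
  · rw [← mul_smul, DG_mul_DY, add_smul, mul_smul, mul_smul]
    exact add_mem (DY_smul_mem_span_jordanPlane hgm) (DX_smul_mem_span_jordanPlane hgm)

theorem DGinv_smul_mem_span_jordanPlane (hm : m ∈ span (jordanPlane F) {z}) :
    DGinv F • m ∈ span (jordanPlane F) {z} := by
  refine smul_mem_span_jordanPlane ?_ (fun m _ hgm ↦ ?_) (fun m _ hgm ↦ ?_) hm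
  · rw [hz.DGinv_smul]
    exact smul_of_tower_mem _ a⁻¹ (mem_span_singleton_self z)
  · rw [← mul_smul, (commute_DGinv_DX F).eq, mul_smul]
    exact DX_smul_mem_span_jordanPlane hgm
  · rw [← mul_smul, DGinv_mul_DY, sub_smul, mul_smul, mul_smul]
    exact sub_mem (DY_smul_mem_span_jordanPlane hgm) (DX_smul_mem_span_jordanPlane hgm)

theorem DZ_smul_mem_span_jordanPlane (hm : m ∈ span (jordanPlane F) {z}) :
    DZ F • m ∈ span (jordanPlane F) {z} := by
  refine smul_mem_span_jordanPlane ?_ (fun m hm hζm ↦ ?_) (fun m hm hζm ↦ ?_) hm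
  · rw [hz.DZ_smul]
    exact smul_of_tower_mem _ (-(c / 2)) (mem_span_singleton_self z)
  · rw [← mul_smul, DZ_mul_DX, add_smul, mul_smul]
    exact add_mem (DX_smul_mem_span_jordanPlane hζm) (DX_smul_mem_span_jordanPlane hm)
  · rw [← mul_smul, DZ_mul_DY, add_smul, mul_smul]
    exact add_mem (DY_smul_mem_span_jordanPlane hζm) (DY_smul_mem_span_jordanPlane hm)

theorem DU_smul_mem_span_jordanPlane (hm : m ∈ span (jordanPlane F) {z}) :
    DU F • m ∈ span (jordanPlane F) {z} := by
  refine smul_mem_span_jordanPlane ?_ (fun m _ hum ↦ ?_) (fun m hm hum ↦ ?_) hm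
  · rw [hz.DU_smul]
    exact zero_mem _
  · rw [← mul_smul, (commute_DU_DX F).eq, mul_smul]
    exact DX_smul_mem_span_jordanPlane hum
  · rw [← mul_smul, DU_mul_DY, add_smul, sub_smul, one_smul, mul_smul]
    exact add_mem (DY_smul_mem_span_jordanPlane hum)
      (sub_mem hm (hz.DG_smul_mem_span_jordanPlane hm))

theorem DV_smul_mem_span_jordanPlane (hm : m ∈ span (jordanPlane F) {z}) :
    DV F • m ∈ span (jordanPlane F) {z} := by
  refine smul_mem_span_jordanPlane ?_ (fun m hm hvm ↦ ?_) (fun m hm hvm ↦ ?_) hm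
  · rw [hz.DV_smul]
    exact zero_mem _
  · rw [← mul_smul, DV_mul_DX, add_smul, add_smul, sub_smul, one_smul, mul_smul, mul_smul]
    exact add_mem (add_mem (DX_smul_mem_span_jordanPlane hvm)
      (sub_mem hm (hz.DG_smul_mem_span_jordanPlane hm)))
      (DX_smul_mem_span_jordanPlane (hz.DU_smul_mem_span_jordanPlane hm))
  · rw [← mul_smul, DV_mul_DY, add_smul, sub_smul, mul_smul, mul_smul, mul_smul]
    exact add_mem (sub_mem (DY_smul_mem_span_jordanPlane hvm)
      (hz.DG_smul_mem_span_jordanPlane (hz.DZ_smul_mem_span_jordanPlane hm)))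
      (DY_smul_mem_span_jordanPlane (hz.DU_smul_mem_span_jordanPlane hm))

theorem smul_mem_span_jordanPlane (d : D F) : d • z ∈ span (jordanPlane F) {z} := by
  let W : Submodule F M := (span (jordanPlane F) {z}).restrictScalars F
  suffices ∀ (s : JGen), ∀ w ∈ W, Dmk F (ι F s) • w ∈ W from
    smul_mem_of_forall_generator_smul_mem this d z (mem_span_singleton_self z)
  rintro (_ | _ | _ | _ | _ | _ | _) w hw
  exacts [hz.DU_smul_mem_span_jordanPlane hw, hz.DV_smul_mem_span_jordanPlane hw,
    hz.DZ_smul_mem_span_jordanPlane hw, hz.DG_smul_mem_span_jordanPlane hw,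
    hz.DGinv_smul_mem_span_jordanPlane hw, DX_smul_mem_span_jordanPlane hw,
    DY_smul_mem_span_jordanPlane hw]

theorem DG_smul_DY_pow_smul_sub_mem (n : ℕ) :
    DG F • DY F ^ n • z - a • DY F ^ n • z ∈ yFiltration F z n := by
  induction n with
  | zero =>
    rw [pow_zero, one_smul, hz.DG_smul, sub_self]
    exact zero_mem _
  | succ n ih =>
    set w := DY F ^ n • z with hw
    have key : DG F • DY F ^ (n + 1) • z - a • DY F ^ (n + 1) • z =
        DY F • (DG F • w - a • w) + (DX F • (DG F • w - a • w) + a • DX F • w) := by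
      rw [pow_succ', mul_smul, ← hw, ← mul_smul (DG F), DG_mul_DY, add_smul, mul_smul, mul_smul,
        smul_sub, smul_sub, smul_comm (DY F) a, smul_comm (DX F) a]
      abel
    have hw_mem : w ∈ yFiltration F z (n + 1) := DY_pow_smul_mem_yFiltration n.lt_succ_self
    rw [key]
    exact add_mem (DY_smul_mem_yFiltration ih)
      (add_mem (DX_smul_mem_yFiltration (yFiltration_mono n.le_succ ih))
        (smul_of_tower_mem _ a (DX_smul_mem_yFiltration hw_mem)))

theorem DU_smul_DY_pow_succ_smul_sub_mem (n : ℕ) :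
    DU F • DY F ^ (n + 1) • z - ((n + 1) * (1 - a)) • DY F ^ n • z ∈ yFiltration F z n := by
  induction n with
  | zero =>
    have : DU F • DY F • z = (1 - a) • z := by
      rw [← mul_smul, DU_mul_DY, add_smul, mul_smul, hz.DU_smul, smul_zero, zero_add, sub_smul,
        sub_smul, one_smul, one_smul, hz.DG_smul]
    simp [this]
  | succ n ih =>
    set w := DY F ^ (n + 1) • z with hw
    have split_coeff : (((n + 1 : ℕ) + 1) * (1 - a)) • w =
        ((n + 1) * (1 - a)) • w + (w - a • w) := by
      rw [Nat.cast_succ, add_mul (n + 1 : F) 1, one_mul, add_smul, sub_smul, one_smul]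
    have key : DU F • DY F ^ (n + 1 + 1) • z - (((n + 1 : ℕ) + 1) * (1 - a)) • w =
        DY F • (DU F • w - ((n + 1) * (1 - a)) • DY F ^ n • z) - (DG F • w - a • w) := by
      rw [pow_succ' _ (n + 1), mul_smul, ← hw, ← mul_smul (DU F), DU_mul_DY, add_smul, mul_smul,
        sub_smul, one_smul, smul_sub, smul_comm (DY F) (_ : F),
        ← mul_smul (DY F) (DY F ^ n), ← pow_succ', ← hw, split_coeff]
      abel
    rw [key]
    exact sub_mem (DY_smul_mem_yFiltration ih) (hz.DG_smul_DY_pow_smul_sub_mem (n + 1))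

theorem DU_smul_mem_yFiltration {n : ℕ} (hm : m ∈ yFiltration F z (n + 1)) :
    DU F • m ∈ yFiltration F z n := by
  refine smul_mem_span_adjoin_DX_of_commute (commute_DU_DX F) ?_ hm
  rintro _ ⟨_ | j, hj, rfl⟩
  · simp [hz.DU_smul]
  · have hjn : j < n := Nat.lt_of_succ_lt_succ hj
    rw [← sub_add_cancel (DU F • DY F ^ (j + 1) • z) (((j + 1) * (1 - a)) • DY F ^ j • z)]
    exact add_mem (yFiltration_mono hjn.le (hz.DU_smul_DY_pow_succ_smul_sub_mem j))
      (smul_of_tower_mem _ _ (DY_pow_smul_mem_yFiltration hjn))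

open Polynomial in
theorem DV_smul_aeval_smul (p : F[X]) :
    DV F • aeval (DX F) p • z = (1 - a) • aeval (DX F) (derivative p) • z := by
  have commutator : DV F * DX F = DX F * DV F + (1 - DG F + DX F * DU F) := by
    rw [DV_mul_DX, add_assoc]
  have commutator_comm : Commute (1 - DG F + DX F * DU F) (DX F) :=
    ((Commute.one_left _).sub_left (commute_DG_DX F)).add_left
      ((Commute.refl _).mul_left (commute_DU_DX F))
  have commutator_smul : (1 - DG F + DX F * DU F) • z = (1 - a) • z := by
    rw [add_smul, sub_smul, mul_smul, hz.DU_smul, hz.DG_smul, smul_zero, add_zero, sub_smul,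
      one_smul, one_smul]
  rw [← mul_smul, mul_aeval_of_mul_eq_mul_add commutator commutator_comm, add_smul, mul_smul,
    mul_smul, hz.DV_smul, smul_zero, zero_add, commutator_smul, smul_comm]

variable [CharZero F] {N : Submodule (D F) M}

open Polynomial in
theorem mem_of_aeval_smul_mem (ha : a ≠ 1) {p : F[X]} (hp : p ≠ 0)
    (hN : aeval (DX F) p • z ∈ N) : z ∈ N := by
  induction hd : p.natDegree generalizing p with
  | zero =>
    obtain ⟨b, rfl⟩ := natDegree_eq_zero.1 hd
    rw [aeval_C, algebraMap_smul] at hN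
    exact (N.smul_mem_iff (C_ne_zero.1 hp)).1 hN
  | succ d ih =>
    have hp' : derivative p ≠ 0 := by
      rw [Ne, derivative_eq_zero]
      omega
    refine ih hp' ?_ (by rw [natDegree_derivative, hd, Nat.add_sub_cancel])
    rw [← N.smul_mem_iff (sub_ne_zero.2 ha.symm), ← hz.DV_smul_aeval_smul]
    exact N.smul_mem (DV F) hN

theorem mem_of_smul_DY_pow_smul_add_mem (ha : a ≠ 1) {n : ℕ} {r : Algebra.adjoin F {DX F}}
    (hr : r ≠ 0) (hm : m ∈ yFiltration F z n) (hN : r • DY F ^ n • z + m ∈ N) : z ∈ N := by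
  induction n generalizing r m with
  | zero =>
    rw [yFiltration_zero, mem_bot] at hm
    rw [hm, pow_zero, one_smul, add_zero, Subalgebra.smul_def] at hN
    obtain ⟨p, hp⟩ := Algebra.adjoin_mem_exists_aeval F (DX F) r.2
    refine hz.mem_of_aeval_smul_mem ha (p := p) ?_ (hp ▸ hN)
    rintro rfl
    exact hr (Subtype.ext (by rw [← hp, map_zero, ZeroMemClass.coe_zero]))
  | succ n ih =>
    set b : F := (n + 1) * (1 - a)
    have hb : b ≠ 0 := mul_ne_zero n.cast_add_one_ne_zero (sub_ne_zero.2 ha.symm)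
    set m' := DU F • DY F ^ (n + 1) • z - b • DY F ^ n • z with hm'
    have hm'_mem : m' ∈ yFiltration F z n := hz.DU_smul_DY_pow_succ_smul_sub_mem n
    refine ih (smul_ne_zero hb hr)
      (add_mem (smul_mem _ r hm'_mem) (hz.DU_smul_mem_yFiltration hm)) ?_
    have hur : Commute (DU F) r :=
      Algebra.commute_of_mem_adjoin_singleton_of_commute r.2 (commute_DU_DX F)
    have key : DU F • (r • DY F ^ (n + 1) • z + m) =
        (b • r) • DY F ^ n • z + (r • m' + DU F • m) := by
      rw [smul_add, smul_assoc, hm']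
      simp only [Subalgebra.smul_def, smul_sub, smul_comm _ b]
      rw [← mul_smul (DU F), hur.eq, mul_smul]
      abel
    rw [← key]
    exact N.smul_mem (DU F) hN

theorem mem_of_mem_yFiltration (ha : a ≠ 1) {n : ℕ} (hm : m ∈ yFiltration F z n) (hm0 : m ≠ 0)
    (hN : m ∈ N) : z ∈ N := by
  induction n with
  | zero => exact absurd (by rwa [yFiltration_zero] at hm) hm0
  | succ n ih =>
    obtain ⟨r, m', hm', rfl⟩ := mem_yFiltration_succ_iff.1 hm
    rcases eq_or_ne r 0 with rfl | hr
    · rw [zero_smul, zero_add] at ih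
      exact ih hm'
    · exact hz.mem_of_smul_DY_pow_smul_add_mem ha hr hm' hN

theorem isSimpleModule (ha : a ≠ 1) (hz0 : z ≠ 0) (hspan : span (D F) {z} = ⊤) :
    IsSimpleModule (D F) M := by
  have : Nontrivial M := ⟨z, 0, hz0⟩
  refine (isSimpleModule_iff _ _).2
    { eq_bot_or_eq_top := fun N ↦ or_iff_not_imp_left.2 fun hN ↦ ?_ }
  obtain ⟨m, hmN, hm0⟩ := exists_mem_ne_zero_of_ne_bot hN
  obtain ⟨d, rfl⟩ := mem_span_singleton.1 (hspan ▸ mem_top : m ∈ span (D F) {z})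
  obtain ⟨n, hn⟩ := exists_mem_yFiltration_of_mem_span_jordanPlane (hz.smul_mem_span_jordanPlane d)
  have hzN : z ∈ N := hz.mem_of_mem_yFiltration ha hn hm0 hmN
  rwa [eq_top_iff, ← hspan, span_singleton_le_iff_mem]

end IsHighestWeightVector

end HighestWeight

section Model

variable {F : Type} [Field F]

/-- The operator `f ↦ h(n, w) f(n + d, w + t)` on functions of `(n, w) ∈ ℤ × F`. -/
def weightedShift (h : ℤ → F → F) (d : ℤ) (t : F) : Module.End F (ℤ → F → F) where
  toFun f n w := h n w * f (n + d) (w + t)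
  map_add' f f' := by ext; simp [mul_add]
  map_smul' r f := by ext; simp [mul_left_comm]

theorem weightedShift_apply (h : ℤ → F → F) (d : ℤ) (t : F) (f : ℤ → F → F) (n : ℤ) (w : F) :
    weightedShift h d t f n w = h n w * f (n + d) (w + t) := rfl

/-- A realization of the generators of `D` on functions of `(n, w) ∈ ℤ × F`, regarded as Laurent
series `∑ₙ f(n, w) Tⁿ`: here `x = T`, `y = w T - T² ∂_T / 2`, `ζ = T ∂_T - c / 2`, and `g` is `a`
times the translation `w ↦ w + 1`. Then `u` and `v` are the operators lowering the degree in `T`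
that satisfy the commutation relations with `x` and `y` and kill the constant series `1`. -/
noncomputable def modelOperator (a c : F) : JGen → Module.End F (ℤ → F → F)
  | .u => weightedShift (fun _ _ ↦ -2 * a) 1 1 + weightedShift (fun _ _ ↦ 2 * (1 + a)) 1 (1 / 2) +
      weightedShift (fun _ _ ↦ -2) 1 0
  | .v => weightedShift (fun n w ↦ a * (2 * w - 3 * n + 1 + c)) 1 1 +
      weightedShift (fun n w ↦ 2 * (1 + a) * (n - w) - a * (2 + c)) 1 (1 / 2) +
      weightedShift (fun n (w : F) ↦ 2 * w - n + 1) 1 0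
  | .zeta => weightedShift (fun n _ ↦ n - c / 2) 0 0
  | .g => weightedShift (fun _ _ ↦ a) 0 1
  | .ginv => weightedShift (fun _ _ ↦ a⁻¹) 0 (-1)
  | .x => weightedShift (fun _ _ ↦ 1) (-1) 0
  | .y => weightedShift (fun n w ↦ w - (n - 1) / 2) (-1) 0

variable [CharZero F] {a : F} (ha : a ≠ 0) (c : F)

include ha in
theorem lift_modelOperator_eq_of_rel {p q : FreeAlgebra F JGen} (h : JRel F p q) :
    lift F (modelOperator a c) p = lift F (modelOperator a c) q := by
  cases h <;> ext f n w <;>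
    simp only [map_mul, map_add, map_sub, map_one, map_smul, lift_ι_apply, modelOperator,
      Module.End.mul_apply, Module.End.one_apply, LinearMap.add_apply, LinearMap.sub_apply,
      LinearMap.smul_apply, Pi.add_apply, Pi.sub_apply, Pi.smul_apply, smul_eq_mul,
      weightedShift_apply, mul_inv_cancel_left₀ ha, inv_mul_cancel_left₀ ha] <;>
    push_cast <;> ring_nf

/-- The representation of `D` defined by `modelOperator`. -/
noncomputable def modelRep : D F →ₐ[F] Module.End F (ℤ → F → F) :=
  RingQuot.liftAlgHom F ⟨lift F (modelOperator a c), fun _ _ ↦ lift_modelOperator_eq_of_rel ha c⟩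

theorem modelRep_Dmk_ι (s : JGen) : modelRep ha c (Dmk F (ι F s)) = modelOperator a c s :=
  (RingQuot.liftAlgHom_mkAlgHom_apply F _ _ _).trans (lift_ι_apply _ _)

theorem exists_isHighestWeightVector_ne_zero {a : F} (ha : a ≠ 0) (c : F) :
    ∃ (M : Type) (_ : AddCommGroup M) (_ : Module F M) (_ : Module (D F) M)
      (_ : IsScalarTower F (D F) M) (z : M), IsHighestWeightVector a c z ∧ z ≠ 0 := by
  let _ : Module (D F) (ℤ → F → F) := Module.compHom _ (modelRep ha c).toRingHom
  have smul_eq (d : D F) (f : ℤ → F → F) : d • f = modelRep ha c d f := rfl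
  have : IsScalarTower F (D F) (ℤ → F → F) :=
    ⟨fun r d f ↦ by rw [smul_eq, map_smul, LinearMap.smul_apply, smul_eq]⟩
  have vacuum_isHighestWeightVector :
      IsHighestWeightVector a c (Pi.single 0 1 : ℤ → F → F) := by
    refine ⟨?_, ?_, ?_, ?_⟩ <;> ext n w <;>
      simp only [smul_eq, DG, DZ, DU, DV, modelRep_Dmk_ι, modelOperator, LinearMap.add_apply,
        Pi.add_apply, Pi.smul_apply, weightedShift_apply, Pi.single_apply, ite_apply, Pi.one_apply,
        Pi.zero_apply, smul_eq_mul, add_zero]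
    · rcases eq_or_ne n 0 with rfl | hn <;> simp [*]
    · split_ifs <;> ring
    · split_ifs with hn
      · obtain rfl : n = -1 := by omega
        push_cast
        ring
      · ring
  exact ⟨ℤ → F → F, inferInstance, inferInstance, inferInstance, this, Pi.single 0 1,
    vacuum_isHighestWeightVector, by simp⟩

end Model

section Verma

open Submodule

variable {F : Type} [Field F]

theorem isHighestWeightVector_mmk_one (a c : F) : IsHighestWeightVector a c (mmk F a c 1) := by
  have mmk_one_smul (d : D F) (hd : d ∈ MIdeal F a c) : d • mmk F a c 1 = 0 := by
    rwa [mmk, ← Quotient.mk_smul, smul_eq_mul, mul_one, Quotient.mk_eq_zero]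
  constructor
  · rw [← sub_eq_zero, ← algebraMap_smul (D F) a, ← sub_smul]
    exact mmk_one_smul _ (subset_span (by simp))
  · rw [← sub_eq_zero, neg_smul, sub_neg_eq_add, ← algebraMap_smul (D F) (c / 2), ← add_smul]
    exact mmk_one_smul _ (subset_span (by simp))
  · exact mmk_one_smul _ (subset_span (by simp))
  · exact mmk_one_smul _ (subset_span (by simp))

theorem span_mmk_one (a c : F) : span (D F) {mmk F a c 1} = ⊤ := by
  refine eq_top_iff.2 fun m _ ↦ mem_span_singleton.2 ?_
  obtain ⟨d, rfl⟩ := Submodule.Quotient.mk_surjective _ m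
  exact ⟨d, by rw [mmk, ← Quotient.mk_smul, smul_eq_mul, mul_one]⟩

theorem IsHighestWeightVector.MIdeal_le_ker {M : Type*} [AddCommGroup M] [Module F M]
    [Module (D F) M] [IsScalarTower F (D F) M] {a c : F} {z : M}
    (hz : IsHighestWeightVector a c z) :
    MIdeal F a c ≤ LinearMap.ker (LinearMap.toSpanSingleton (D F) M z) := by
  refine span_le.2 ?_
  rintro _ (rfl | rfl | rfl | rfl)
  · simp [sub_smul, hz.DG_smul]
  · simp [add_smul, hz.DZ_smul]
  · simp [hz.DU_smul]
  · simp [hz.DV_smul]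

theorem mmk_one_ne_zero [CharZero F] {a : F} (ha : a ≠ 0) (c : F) : mmk F a c 1 ≠ 0 := by
  intro h
  obtain ⟨M, _, _, _, _, z, hz, hz0⟩ := exists_isHighestWeightVector_ne_zero ha c
  have one_mem_ker := hz.MIdeal_le_ker ((Quotient.mk_eq_zero _).1 h)
  exact hz0 (by simpa using one_mem_ker)

end Verma

theorem Verma_simple_of_ne_one_general (F : Type) [Field F] [CharZero F] (a c : F) (ha : a ≠ 0)
    (ha1 : a ≠ 1) : IsSimpleModule (D F) (Mver F a c) :=
  (isHighestWeightVector_mmk_one a c).isSimpleModule ha1 (mmk_one_ne_zero ha c) (span_mmk_one a c)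

/-- if `a ∈ k^×` and `a ≠ 1`, then the Verma module `M_{a,c}` is a simple
`D`-module for every `c ∈ k`. -/
theorem Verma_simple_of_ne_one (a c : k) (ha : a ≠ 0) (ha1 : a ≠ 1) :
    IsSimpleModule (D k) (Mver k a c) :=
  Verma_simple_of_ne_one_general k a c ha ha1
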